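/- Let S be a set, P a point-separating family of pseudometrics on S, X the uniform space on S induced by P, and Y a uniform space on S coarser than X (the identity map X → Y is uniformly continuous). Assume that for every d ∈ P and z ∈ S the function x ↦ d(x,z) is uniformly continuous on Y. Let μ be a positive uniform measure on X and let (μ_γ)_γ be a net of positive uniform measures on X such that lim_γ μ_γ(g) = μ(g) for every g ∈ U_b(Y). Then lim_γ μ_γ(f) = μ(f) for every f ∈ U_b(X). (Hence the restriction map is a topological embedding of the positive cone of uniform measures on X, with the weak topology determined by U_b(X), into the positive cone of uniform measures on Y, with the weak topology determined by U_b(Y).) -/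

import Mathlib

/-!
Positivity reduces the claim to a one-sided approximation: every `f ∈ U_b(X)` is bounded below by
some `h ∈ U_b(Y)` with `μ f - ε ≤ μ h` (`exists_minorant`). Indeed such an `h` gives
`μ_γ f ≥ μ_γ h → μ h ≥ μ f - ε`, and the same applied to `-f` gives the upper bound.

To find `h`, choose a pseudometric `d`, uniformly continuous on `X` and with all `d(·, z)` uniformly
continuous on `Y`, such that `|f x - f y| ≤ ε + d(x, y)` (`exists_control`). For finite `F ⊆ S` put
`h_F(x) = max (-C) (max_{z ∈ F} (f z - ε - d(x, z)))` where `|f| ≤ C`. Each `h_F` is in `U_b(Y)`,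
lies below `f`, and is `1`-Lipschitz for `d`. The increasing net `h_F` converges pointwise to some
`g` with `f - ε ≤ g`, and all these functions lie in one UEB set of `X`, so `μ h_F → μ g`.
-/


open Topology Filter

/-- A pseudometric on a set `S`. -/
def IsPseudometric {S : Type*} (d : S → S → ℝ) : Prop :=
  (∀ x, d x x = 0) ∧ (∀ x y, d x y = d y x) ∧ ∀ x y z, d x z ≤ d x y + d y z

/-- The coarsest uniformity (as a filter on `S × S`) making each pseudometric in `P`
uniformly continuous: it is generated by the entourages `{(x,y) : d(x,y) < ε}`. -/
def pseudometricUniformity {S : Type*} (P : Set (S → S → ℝ)) : Filter (S × S) :=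
  ⨅ d ∈ P, ⨅ ε ∈ Set.Ioi (0 : ℝ), Filter.principal {p : S × S | d p.1 p.2 < ε}

/-- `P` separates the points of `S`. -/
def SeparatesPoints' {S : Type*} (P : Set (S → S → ℝ)) : Prop :=
  ∀ x y : S, x ≠ y → ∃ d ∈ P, 0 < d x y

/-- The bounded uniformly continuous real-valued functions on `S` for the uniformity `u`. -/
def Ub {S : Type*} (u : UniformSpace S) : Set (S → ℝ) :=
  {f | @UniformContinuous S ℝ u _ f ∧ ∃ C : ℝ, ∀ x, |f x| ≤ C}

/-- A set of functions is UEB for `u` if it is uniformly equicontinuous (w.r.t. `u`) and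
uniformly bounded. -/
def IsUEB {S : Type*} (u : UniformSpace S) (H : Set (S → ℝ)) : Prop :=
  (@UniformEquicontinuous (↥H) ℝ S _ u fun f => (f : S → ℝ)) ∧
  ∃ C : ℝ, ∀ f ∈ H, ∀ x, |f x| ≤ C

/-- A uniform measure on `S` with uniformity `u`: a sup-norm-bounded linear functional on
`Ub u` whose restriction to every UEB set is continuous in the topology of pointwise
convergence (the product topology on `S → ℝ`). -/
def IsUniformMeasure {S : Type*} (u : UniformSpace S) (μ : (S → ℝ) → ℝ) : Prop :=
  (∀ f ∈ Ub u, ∀ g ∈ Ub u, μ (f + g) = μ f + μ g) ∧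
  (∀ f ∈ Ub u, ∀ c : ℝ, μ (c • f) = c * μ f) ∧
  (∃ C : ℝ, ∀ f ∈ Ub u, ∀ B : ℝ, (∀ x, |f x| ≤ B) → |μ f| ≤ C * B) ∧
  (∀ H : Set (S → ℝ), H ⊆ Ub u → IsUEB u H → ContinuousOn μ H)

section UbLemmas

variable {S : Type*} {u : UniformSpace S}

theorem Ub_add {f g : S → ℝ} (hf : f ∈ Ub u) (hg : g ∈ Ub u) : f + g ∈ Ub u := by
  obtain ⟨hf, C, hC⟩ := hf
  obtain ⟨hg, D, hD⟩ := hg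
  exact ⟨hf.add hg, C + D, fun x => (abs_add_le _ _).trans (add_le_add (hC x) (hD x))⟩

theorem Ub_smul {f : S → ℝ} (c : ℝ) (hf : f ∈ Ub u) : c • f ∈ Ub u := by
  obtain ⟨hf, C, hC⟩ := hf
  refine ⟨hf.const_smul c, |c| * C, fun x => ?_⟩
  simp only [Pi.smul_apply, smul_eq_mul, abs_mul]
  exact mul_le_mul_of_nonneg_left (hC x) (abs_nonneg c)

theorem Ub_const (c : ℝ) : (fun _ => c) ∈ Ub u :=
  ⟨uniformContinuous_const, |c|, fun _ => le_rfl⟩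

theorem IsUniformMeasure.mono {μ : (S → ℝ) → ℝ} (hμ : IsUniformMeasure u μ)
    (hpos : ∀ f ∈ Ub u, (∀ x, 0 ≤ f x) → 0 ≤ μ f) {f g : S → ℝ} (hf : f ∈ Ub u)
    (hg : g ∈ Ub u) (h : ∀ x, f x ≤ g x) : μ f ≤ μ g := by
  have h1 := hpos _ (Ub_add hg (Ub_smul (-1) hf)) fun x => by
    have := h x
    simp only [Pi.add_apply, Pi.smul_apply, smul_eq_mul]
    linarith
  rw [hμ.1 _ hg _ (Ub_smul (-1) hf), hμ.2.1 _ hf] at h1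
  linarith

end UbLemmas

/-- A pseudometric `d` that is uniformly continuous for the uniformity `F` and all of whose
sections `d(·, z)` are uniformly continuous for `v`. -/
def IsAdmissible {S : Type*} (F : Filter (S × S)) (v : UniformSpace S) (d : S → S → ℝ) : Prop :=
  IsPseudometric d ∧ (∀ δ > 0, {p : S × S | d p.1 p.2 < δ} ∈ F) ∧
    ∀ z, @UniformContinuous S ℝ v _ fun x => d x z

theorem IsPseudometric.nonneg {S : Type*} {d : S → S → ℝ} (hd : IsPseudometric d) (x y : S) :
    0 ≤ d x y := by
  have h := hd.2.2 x y x
  rw [hd.1, hd.2.1 y x] at h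
  linarith

section Admissible

variable {S : Type*} {F : Filter (S × S)} {v : UniformSpace S}

theorem IsAdmissible.zero : IsAdmissible F v fun _ _ => 0 := by
  refine ⟨⟨by simp, by simp, by simp⟩, fun δ hδ => ?_, fun z => uniformContinuous_const⟩
  have : {p : S × S | (0 : ℝ) < δ} = Set.univ := Set.eq_univ_of_forall fun _ => hδ
  rw [this]
  exact Filter.univ_mem

theorem IsAdmissible.add {d e : S → S → ℝ} (hd : IsAdmissible F v d) (he : IsAdmissible F v e) :
    IsAdmissible F v fun x y => d x y + e x y := by
  obtain ⟨⟨d1, d2, d3⟩, d4, d5⟩ := hd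
  obtain ⟨⟨e1, e2, e3⟩, e4, e5⟩ := he
  refine ⟨⟨fun x => by simp [d1, e1], fun x y => congrArg₂ _ (d2 x y) (e2 x y), fun x y z => ?_⟩,
    fun δ hδ => ?_, fun z => (d5 z).add (e5 z)⟩
  · linarith [d3 x y z, e3 x y z]
  · filter_upwards [d4 (δ / 2) (half_pos hδ), e4 (δ / 2) (half_pos hδ)] with p h1 h2
    linarith

theorem IsAdmissible.const_mul {d : S → S → ℝ} (hd : IsAdmissible F v d) {K : ℝ} (hK : 0 ≤ K) :
    IsAdmissible F v fun x y => K * d x y := by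
  obtain ⟨⟨d1, d2, d3⟩, d4, d5⟩ := hd
  refine ⟨⟨fun x => by simp [d1], fun x y => congrArg _ (d2 x y), fun x y z => ?_⟩,
    fun δ hδ => ?_, fun z => (d5 z).const_smul K⟩
  · rw [← mul_add]
    exact mul_le_mul_of_nonneg_left (d3 x y z) hK
  · have hK' : 0 < K + 1 := by linarith
    filter_upwards [d4 (δ / (K + 1)) (div_pos hδ hK')] with p h1
    rw [lt_div_iff₀ hK'] at h1
    have := IsPseudometric.nonneg ⟨d1, d2, d3⟩ p.1 p.2
    linarith

/-- The admissible pseudometrics are closed under addition, so every entourage generated by `P`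
contains a single ball of one of them. -/
theorem exists_admissible_ball {P : Set (S → S → ℝ)} (hP : ∀ d ∈ P, IsAdmissible F v d)
    {U : Set (S × S)} (hU : U ∈ pseudometricUniformity P) :
    ∃ d, IsAdmissible F v d ∧ ∃ δ > 0, {p : S × S | d p.1 p.2 < δ} ⊆ U := by
  let G : Filter (S × S) :=
    { sets := {U | ∃ d, IsAdmissible F v d ∧ ∃ δ > 0, {p : S × S | d p.1 p.2 < δ} ⊆ U}
      univ_sets := ⟨_, IsAdmissible.zero, 1, one_pos, Set.subset_univ _⟩
      sets_of_superset := by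
        rintro A B ⟨d, hd, δ, hδ, h⟩ hAB
        exact ⟨d, hd, δ, hδ, h.trans hAB⟩
      inter_sets := by
        rintro A B ⟨d, hd, δ, hδ, h⟩ ⟨e, he, η, hη, h'⟩
        refine ⟨_, hd.add he, min δ η, lt_min hδ hη, fun p hp => ?_⟩
        have h1 := hd.1.nonneg p.1 p.2
        have h2 := he.1.nonneg p.1 p.2
        have h3 : d p.1 p.2 + e p.1 p.2 < δ ∧ d p.1 p.2 + e p.1 p.2 < η := lt_min_iff.1 hp
        have h4 : d p.1 p.2 < δ := by linarith [h3.1]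
        have h5 : e p.1 p.2 < η := by linarith [h3.2]
        exact ⟨h h4, h' h5⟩ }
  have hG : G ≤ pseudometricUniformity P := by
    refine le_iInf₂ fun d hd => le_iInf₂ fun δ hδ => Filter.le_principal_iff.2 ?_
    exact ⟨d, hP d hd, δ, hδ, subset_rfl⟩
  exact hG hU

end Admissible

/-- A bounded uniformly continuous function is, up to an additive error `ε`, `1`-Lipschitz for
some admissible pseudometric. -/
theorem exists_control {S : Type*} {P : Set (S → S → ℝ)}
    (uY : UniformSpace S) {uX : UniformSpace S} (hX : uniformity S = pseudometricUniformity P)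
    (hP : ∀ d ∈ P, IsAdmissible (uniformity S) uY d)
    {f : S → ℝ} (hf : UniformContinuous f) {C : ℝ} (hC : ∀ x, |f x| ≤ C) {ε : ℝ} (hε : 0 < ε) :
    ∃ d, IsAdmissible (uniformity S) uY d ∧ ∀ x y, f x ≤ f y + ε + d x y := by
  have hU : {p : S × S | dist (f p.1) (f p.2) < ε} ∈ pseudometricUniformity P :=
    hX ▸ hf (Metric.dist_mem_uniformity hε)
  obtain ⟨d, hd, δ, hδ, h⟩ := exists_admissible_ball (v := uY) hP hU
  rcases isEmpty_or_nonempty S with hS | ⟨⟨s⟩⟩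
  · exact ⟨d, hd, fun x => hS.elim x⟩
  have hC0 : 0 ≤ C := (abs_nonneg _).trans (hC s)
  -- Where `d ≥ δ`, the slope `2 * C / δ` makes the bound at least the oscillation `2 * C` of `f`.
  have hK : 0 ≤ 2 * C / δ := by positivity
  refine ⟨_, hd.const_mul hK, fun x y => ?_⟩
  have h0 := mul_nonneg hK (hd.1.nonneg x y)
  rcases lt_or_ge (d x y) δ with hlt | hge
  · have h1 : dist (f x) (f y) < ε := h (show (x, y) ∈ {p : S × S | d p.1 p.2 < δ} from hlt)
    rw [Real.dist_eq] at h1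
    linarith [le_abs_self (f x - f y)]
  · have h1 : 2 * C / δ * δ ≤ 2 * C / δ * d x y := mul_le_mul_of_nonneg_left hge hK
    rw [div_mul_cancel₀ _ hδ.ne'] at h1
    linarith [(abs_le.1 (hC x)).2, (abs_le.1 (hC y)).1]

/-- The functions bounded by `C` that are `1`-Lipschitz for `d`. -/
def lipSet {S : Type*} (d : S → S → ℝ) (C : ℝ) : Set (S → ℝ) :=
  {g | (∀ x y, g x ≤ g y + d x y) ∧ ∀ x, |g x| ≤ C}

section LipSet

variable {S : Type*} {v u : UniformSpace S} {d : S → S → ℝ}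

theorem isUEB_lipSet (hd : IsAdmissible (uniformity S) v d) (C : ℝ) : IsUEB u (lipSet d C) := by
  refine ⟨Metric.uniformEquicontinuous_iff_right.2 fun ε hε => ?_, C, fun f hf => hf.2⟩
  filter_upwards [hd.2.1 ε hε] with p hp g
  have h1 := g.2.1 p.1 p.2
  have h2 := g.2.1 p.2 p.1
  rw [hd.1.2.1 p.2 p.1] at h2
  rw [Real.dist_eq, abs_lt]
  constructor <;> linarith

theorem lipSet_subset_Ub (hd : IsAdmissible (uniformity S) v d) (C : ℝ) : lipSet d C ⊆ Ub u :=
  fun f hf => ⟨(isUEB_lipSet hd C).1.uniformContinuous ⟨f, hf⟩, C, hf.2⟩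

end LipSet

/-- The minorant of `f` built from the finitely many points of `F`: the maximum of `-C` and of the
cones `f z - ε - d(·, z)` with `z ∈ F`. -/
noncomputable def coneMax {S : Type*} (d : S → S → ℝ) (f : S → ℝ) (C ε : ℝ) (F : Finset S)
    (x : S) : ℝ :=
  F.fold max (-C) fun z => f z - ε - d x z

section ConeMax

variable {S : Type*} {d : S → S → ℝ} {f : S → ℝ} {C ε : ℝ}

theorem coneMax_le_iff {F : Finset S} {x : S} {c : ℝ} :
    coneMax d f C ε F x ≤ c ↔ -C ≤ c ∧ ∀ z ∈ F, f z - ε - d x z ≤ c :=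
  Finset.fold_max_le c

theorem neg_le_coneMax (F : Finset S) (x : S) : -C ≤ coneMax d f C ε F x :=
  (coneMax_le_iff.1 le_rfl).1

theorem cone_le_coneMax {F : Finset S} (x : S) {z : S} (hz : z ∈ F) :
    f z - ε - d x z ≤ coneMax d f C ε F x :=
  (coneMax_le_iff.1 le_rfl).2 z hz

theorem coneMax_mono (x : S) : Monotone fun F => coneMax d f C ε F x := fun _ G hFG =>
  coneMax_le_iff.2 ⟨neg_le_coneMax G x, fun _ hz => cone_le_coneMax x (hFG hz)⟩

theorem coneMax_le (hC : ∀ x, |f x| ≤ C) (hfd : ∀ x y, f x ≤ f y + ε + d x y)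
    (hd : IsPseudometric d) (F : Finset S) (x : S) : coneMax d f C ε F x ≤ f x := by
  refine coneMax_le_iff.2 ⟨(abs_le.1 (hC x)).1, fun z _ => ?_⟩
  have := hfd z x
  rw [hd.2.1] at this
  linarith

theorem coneMax_mem_lipSet (hC : ∀ x, |f x| ≤ C) (hfd : ∀ x y, f x ≤ f y + ε + d x y)
    (hd : IsPseudometric d) (F : Finset S) : coneMax d f C ε F ∈ lipSet d C := by
  refine ⟨fun x y => coneMax_le_iff.2 ⟨?_, fun z hz => ?_⟩, fun x => abs_le.2
    ⟨neg_le_coneMax F x, (coneMax_le hC hfd hd F x).trans (abs_le.1 (hC x)).2⟩⟩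
  · linarith [neg_le_coneMax (d := d) (f := f) (C := C) (ε := ε) F y, hd.nonneg x y]
  · have := cone_le_coneMax (d := d) (f := f) (C := C) (ε := ε) y hz
    have h3 := hd.2.2 y x z
    rw [hd.2.1 y x] at h3
    linarith

theorem uniformContinuous_coneMax {v : UniformSpace S}
    (hd : ∀ z, UniformContinuous fun x => d x z) (F : Finset S) :
    UniformContinuous (coneMax d f C ε F) := by
  classical
  induction F using Finset.induction_on with
  | empty =>
    exact uniformContinuous_const (b := -C)
  | insert a F ha ih =>
    have h : coneMax d f C ε (insert a F) =
        fun x => max (f a - ε - d x a) (coneMax d f C ε F x) := by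
      funext x
      exact Finset.fold_insert ha
    rw [h]
    exact lipschitzWith_max.uniformContinuous.comp
      ((uniformContinuous_const.sub (hd a)).prodMk ih)

end ConeMax

/-- Every `f ∈ U_b(X)` has minorants in `U_b(Y)` with `μ`-value arbitrarily close to `μ f`. -/
theorem exists_minorant {S : Type*} {P : Set (S → S → ℝ)}
    (uY : UniformSpace S) {uX : UniformSpace S} (hX : uniformity S = pseudometricUniformity P)
    (hP : ∀ d ∈ P, IsAdmissible (uniformity S) uY d)
    {μ : (S → ℝ) → ℝ} (hμ : IsUniformMeasure uX μ)
    (hμpos : ∀ f ∈ Ub uX, (∀ x, 0 ≤ f x) → 0 ≤ μ f)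
    {f : S → ℝ} (hf : f ∈ Ub uX) {ε : ℝ} (hε : 0 < ε) :
    ∃ h ∈ Ub uY, h ∈ Ub uX ∧ (∀ x, h x ≤ f x) ∧ μ f - ε < μ h := by
  obtain ⟨hfu, C, hC⟩ := hf
  set m : ℝ := μ fun _ => 1 with hm
  have hm0 : 0 ≤ m := hμpos _ (Ub_const 1) fun _ => zero_le_one
  -- The error `η` in the minorants costs `η * m` in `μ`-value, at most half of `ε`.
  set η : ℝ := ε / 2 / (m + 1) with hη
  have hη0 : 0 < η := by positivity
  have hηm : η * m ≤ ε / 2 := by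
    have : η * (m + 1) = ε / 2 := div_mul_cancel₀ _ (by positivity)
    linarith
  obtain ⟨d, hd, hfd⟩ := exists_control uY hX hP hfu hC hη0
  set h : Finset S → S → ℝ := coneMax d f C η with hh
  have hmem : ∀ F, h F ∈ lipSet d C := coneMax_mem_lipSet hC hfd hd.1
  have hbdd : ∀ x, BddAbove (Set.range fun F => h F x) := fun x =>
    ⟨f x, Set.forall_mem_range.2 fun F => coneMax_le hC hfd hd.1 F x⟩
  let g : S → ℝ := fun x => ⨆ F, h F x
  have hlim : Tendsto h atTop (𝓝 g) :=
    tendsto_pi_nhds.2 fun x => tendsto_atTop_ciSup (coneMax_mono x) (hbdd x)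
  have hg : g ∈ lipSet d C := by
    have hl := fun x => tendsto_pi_nhds.1 hlim x
    exact ⟨fun x y => le_of_tendsto_of_tendsto' (hl x) ((hl y).add_const _)
        fun F => (hmem F).1 x y,
      fun x => le_of_tendsto' (hl x).abs fun F => (hmem F).2 x⟩
  have hfg : ∀ x, f x + (-η) ≤ g x := fun x => by
    have h1 : f x - η - d x x ≤ h {x} x := cone_le_coneMax x (Finset.mem_singleton_self x)
    rw [hd.1.1] at h1
    have h2 : h {x} x ≤ g x := le_ciSup (hbdd x) {x}
    linarith
  have hsub := lipSet_subset_Ub hd C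
  have hμg : μ f - η * m ≤ μ g := by
    have hf : f ∈ Ub uX := ⟨hfu, C, hC⟩
    have h1 := hμ.mono hμpos (Ub_add hf (Ub_smul (-η) (Ub_const 1))) (hsub hg) fun x => by
      simpa using hfg x
    rw [hμ.1 _ hf _ (Ub_smul (-η) (Ub_const 1)), hμ.2.1 _ (Ub_const 1)] at h1
    linarith
  have hμlim : Tendsto (fun F => μ (h F)) atTop (𝓝 (μ g)) :=
    (hμ.2.2.2 _ hsub (isUEB_lipSet hd C) g hg).tendsto.comp
      (tendsto_nhdsWithin_iff.2 ⟨hlim, Eventually.of_forall hmem⟩)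
  obtain ⟨F, hF⟩ := (hμlim.eventually_const_lt (show μ g - ε / 2 < μ g by linarith)).exists
  exact ⟨h F, ⟨uniformContinuous_coneMax hd.2.2 F, C, (hmem F).2⟩, hsub (hmem F),
    coneMax_le hC hfd hd.1 F, by linarith⟩

/-- Topological embedding of positive cones: under the standing assumptions, if a net of
positive uniform measures on `X` converges to a positive uniform measure `μ` on every
`g ∈ U_b(Y)`, then it converges to `μ` on every `f ∈ U_b(X)`. -/
theorem uniform_measure_positive_cone_embedding
    {S : Type*} {ι : Type*} (P : Set (S → S → ℝ)) (hP : ∀ d ∈ P, IsPseudometric d)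
    (hsep : SeparatesPoints' P)
    (uX uY : UniformSpace S)
    (hX : @uniformity S uX = pseudometricUniformity P)
    (hcoarse : @UniformContinuous S S uX uY id)
    (hfun : ∀ d ∈ P, ∀ z : S, @UniformContinuous S ℝ uY _ fun x => d x z)
    (μ : (S → ℝ) → ℝ) (hμ : IsUniformMeasure uX μ)
    (hμpos : ∀ f ∈ Ub uX, (∀ x, 0 ≤ f x) → 0 ≤ μ f)
    (l : Filter ι) (μs : ι → (S → ℝ) → ℝ)
    (hμs : ∀ γ : ι, IsUniformMeasure uX (μs γ))
    (hμspos : ∀ γ : ι, ∀ f ∈ Ub uX, (∀ x, 0 ≤ f x) → 0 ≤ μs γ f)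
    (hconv : ∀ g ∈ Ub uY, Filter.Tendsto (fun γ => μs γ g) l (𝓝 (μ g))) :
    ∀ f ∈ Ub uX, Filter.Tendsto (fun γ => μs γ f) l (𝓝 (μ f)) := by
  have hadm : ∀ d ∈ P, IsAdmissible (@uniformity S uX) uY d := fun d hd =>
    ⟨hP d hd, fun δ hδ => hX ▸ Filter.mem_iInf_of_mem d (Filter.mem_iInf_of_mem hd
      (Filter.mem_iInf_of_mem δ (Filter.mem_iInf_of_mem hδ (Filter.mem_principal_self _)))),
      hfun d hd⟩
  have key : ∀ f ∈ Ub uX, ∀ a < μ f, ∀ᶠ γ in l, a < μs γ f := by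
    intro f hf a ha
    obtain ⟨h, hY, hX', hle, hlt⟩ :=
      exists_minorant uY hX hadm hμ hμpos hf (sub_pos.2 ha)
    rw [sub_sub_cancel] at hlt
    filter_upwards [(hconv h hY).eventually_const_lt hlt] with γ hγ
    exact hγ.trans_le ((hμs γ).mono (hμspos γ) hX' hf hle)
  intro f hf
  refine tendsto_order.2 ⟨key f hf, fun b hb => ?_⟩
  have h1 := key _ (Ub_smul (-1) hf) (-b) (by rw [hμ.2.1 _ hf]; linarith)
  filter_upwards [h1] with γ hγ
  rw [(hμs γ).2.1 _ hf] at hγ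
  linarith
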